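/- Let Σ be a complete simplicial rational fan in ℝⁿ (n ≥ 1), let c be a positive integer, and set ρ_δ = c for every δ ∈ Σ¹. Let Δ(L) denote the union over σ ∈ Σ of the convex hulls of {0} ∪ (Σ¹ ∩ σ). Then ρ is convex if and only if Δ(L) is a convex set; and if ρ is strictly convex, then in addition no δ₀ ∈ Σ¹ lies in the convex hull of {0} ∪ (Σ¹ ∖ {δ₀}). -/

import Mathlib

/-- A vector in `ℝⁿ` is integral if all its coordinates are integers. -/
def IsIntegralVec {n : ℕ} (v : Fin n → ℝ) : Prop := ∀ i, ∃ m : ℤ, v i = (m : ℝ)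

/-- The convex cone of all nonnegative linear combinations of a finite set of vectors. -/
def coneHullOf {n : ℕ} (s : Finset (Fin n → ℝ)) : Set (Fin n → ℝ) :=
  { x | ∃ c : (Fin n → ℝ) → ℝ, (∀ v, 0 ≤ c v) ∧ x = ∑ v ∈ s, c v • v }

/-- `F` is a face of the convex cone `σ`: it is cut out of `σ` by a linear functional
that is nonnegative on `σ`. -/
def IsFaceOf {n : ℕ} (F σ : Set (Fin n → ℝ)) : Prop :=
  ∃ u : (Fin n → ℝ) →ₗ[ℝ] ℝ, (∀ x ∈ σ, 0 ≤ u x) ∧ F = {x ∈ σ | u x = 0}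

/-- A complete simplicial rational fan in `ℝⁿ`: a finite nonempty collection of
simplicial rational cones, closed under taking faces, such that the intersection of any
two members is a face of each, and whose union is all of `ℝⁿ`. -/
structure IsCompleteFan {n : ℕ} (S : Set (Set (Fin n → ℝ))) : Prop where
  finite : S.Finite
  nonempty : S.Nonempty
  simplicial : ∀ σ ∈ S, ∃ s : Finset (Fin n → ℝ),
    (∀ v ∈ s, IsIntegralVec v) ∧
    (LinearIndependent ℝ (fun v : s => (v : Fin n → ℝ))) ∧
    σ = coneHullOf s
  face_mem : ∀ σ ∈ S, ∀ F : Set (Fin n → ℝ), IsFaceOf F σ → F ∈ S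
  inter_face : ∀ σ ∈ S, ∀ τ ∈ S, IsFaceOf (σ ∩ τ) σ ∧ IsFaceOf (σ ∩ τ) τ
  complete : ⋃₀ S = Set.univ

/-- A primitive integral vector: an integral vector that is not a positive integer
multiple (with factor ≠ 1) of another integral vector. -/
def IsPrimitiveVec {n : ℕ} (v : Fin n → ℝ) : Prop :=
  IsIntegralVec v ∧ ∀ (m : ℕ) (w : Fin n → ℝ), IsIntegralVec w → v = (m : ℝ) • w → m = 1

/-- `Σ¹` : the set of primitive integral vectors spanning the one-dimensional members
of the fan `S`. -/
def fanRays {n : ℕ} (S : Set (Set (Fin n → ℝ))) : Set (Fin n → ℝ) :=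
  { v | IsPrimitiveVec v ∧ {x | ∃ t : ℝ, 0 ≤ t ∧ x = t • v} ∈ S }

/-- The convex cone generated by a set `A` : all finite nonnegative linear combinations
of elements of `A`. -/
def coneGenBy {E : Type*} [AddCommMonoid E] [Module ℝ E] (A : Set E) : Set E :=
  { x | ∃ (t : Finset E) (c : E → ℝ), ↑t ⊆ A ∧ (∀ v, 0 ≤ c v) ∧ x = ∑ v ∈ t, c v • v }

/-- The epigraph `C_ρ = {(x, α) : α ≥ f(x)}` of a function `f : ℝⁿ → ℝ`. -/
def epigraphOf {n : ℕ} (f : (Fin n → ℝ) → ℝ) : Set ((Fin n → ℝ) × ℝ) :=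
  { p | f p.1 ≤ p.2 }

/-- `ρ` is convex: for every `n`-dimensional cone `σ` of the fan `S` (i.e. `σ` spans `ℝⁿ`),
the linear functional `l_σ` agreeing with `ρ` on the rays of `S` lying in `σ`
satisfies `l_σ ≤ f_ρ` everywhere. -/
def RhoIsConvex {n : ℕ} (S : Set (Set (Fin n → ℝ))) (ρ : (Fin n → ℝ) → ℕ)
    (f : (Fin n → ℝ) → ℝ) : Prop :=
  ∀ σ ∈ S, Submodule.span ℝ σ = ⊤ →
    ∀ l : (Fin n → ℝ) →ₗ[ℝ] ℝ, (∀ δ ∈ fanRays S, δ ∈ σ → l δ = (ρ δ : ℝ)) →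
      ∀ x, l x ≤ f x

/-- `ρ` is strictly convex: for every `n`-dimensional cone `σ` of the fan `S`,
`l_σ ≤ f_ρ` everywhere, with equality exactly on `σ`. -/
def RhoIsStrictlyConvex {n : ℕ} (S : Set (Set (Fin n → ℝ))) (ρ : (Fin n → ℝ) → ℕ)
    (f : (Fin n → ℝ) → ℝ) : Prop :=
  ∀ σ ∈ S, Submodule.span ℝ σ = ⊤ →
    ∀ l : (Fin n → ℝ) →ₗ[ℝ] ℝ, (∀ δ ∈ fanRays S, δ ∈ σ → l δ = (ρ δ : ℝ)) →
      ∀ x, l x ≤ f x ∧ (l x = f x ↔ x ∈ σ)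

lemma exists_primitive {n : ℕ} (v : Fin n → ℝ) (hv : IsIntegralVec v) (h0 : v ≠ 0) :
    ∃ (k : ℕ) (w : Fin n → ℝ), 0 < k ∧ IsPrimitiveVec w ∧ v = (k : ℝ) • w := by
  classical
  obtain ⟨i, hi⟩ : ∃ i, v i ≠ 0 := by
    by_contra h
    push Not at h
    exact h0 (funext h)
  obtain ⟨m, hm⟩ := hv i
  have hm0 : m ≠ 0 := by
    rintro rfl
    simp at hm
    exact hi hm
  let P : ℕ → Prop := fun k => ∃ w : Fin n → ℝ, IsIntegralVec w ∧ v = (k : ℝ) • w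
  have hbd : ∀ k, P k → k ≤ m.natAbs := by
    rintro k ⟨w, hw, hvw⟩
    obtain ⟨q, hq⟩ := hw i
    have h1 : (m : ℝ) = (k : ℝ) * q := by
      rw [← hm, ← hq, hvw]
      simp
    have h2 : m = (k : ℤ) * q := by exact_mod_cast h1
    have h3 : (k : ℤ) ∣ m := ⟨q, h2⟩
    exact Nat.le_of_dvd (Int.natAbs_pos.mpr hm0) (Int.natCast_dvd.mp h3)
  have hP1 : P 1 := ⟨v, hv, by simp⟩
  have hm1 : 1 ≤ m.natAbs := hbd 1 hP1
  have hPk : P (Nat.findGreatest P m.natAbs) := Nat.findGreatest_spec hm1 hP1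
  have hk1 : 1 ≤ Nat.findGreatest P m.natAbs := Nat.le_findGreatest hm1 hP1
  have hmax : ∀ j, P j → j ≤ Nat.findGreatest P m.natAbs :=
    fun j hj => Nat.le_findGreatest (hbd j hj) hj
  generalize Nat.findGreatest P m.natAbs = k at hPk hk1 hmax
  obtain ⟨w, hw, hvw⟩ := hPk
  refine ⟨k, w, hk1, ⟨hw, ?_⟩, hvw⟩
  intro j w' hw' hj
  have hj0 : j ≠ 0 := by
    rintro rfl
    apply h0
    rw [hvw, hj]
    simp
  have : k * j ≤ k := hmax _ ⟨w', hw', by rw [hvw, hj, smul_smul]; push_cast; rfl⟩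
  have h5 : j ≤ 1 := by
    by_contra h
    push Not at h
    nlinarith
  omega

lemma exists_functional {n : ℕ} (s : Finset (Fin n → ℝ))
    (hs : LinearIndependent ℝ (fun v : s => (v : Fin n → ℝ))) (g : (Fin n → ℝ) → ℝ) :
    ∃ u : (Fin n → ℝ) →ₗ[ℝ] ℝ, ∀ v ∈ s, u v = g v := by
  let b := Module.Basis.span hs
  obtain ⟨u, hu⟩ := LinearMap.exists_extend (b.constr ℝ (fun v : s => g v))
  refine ⟨u, fun v hv => ?_⟩
  have h1 := LinearMap.congr_fun hu (b ⟨v, hv⟩)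
  rw [Module.Basis.constr_basis] at h1
  simpa [b, Module.Basis.span_apply] using h1

lemma ray_mem {n : ℕ} (S : Set (Set (Fin n → ℝ))) (hS : IsCompleteFan S)
    (s : Finset (Fin n → ℝ))
    (hs : LinearIndependent ℝ (fun v : s => (v : Fin n → ℝ)))
    (hσ : coneHullOf s ∈ S) (v : Fin n → ℝ) (hv : v ∈ s) :
    {x | ∃ t : ℝ, 0 ≤ t ∧ x = t • v} ∈ S := by
  classical
  obtain ⟨u, hu⟩ := exists_functional s hs (fun w => if w = v then 0 else 1)
  have key : ∀ a : (Fin n → ℝ) → ℝ,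
      u (∑ w ∈ s, a w • w) = ∑ w ∈ s, a w * (if w = v then 0 else 1) := by
    intro a
    rw [map_sum]
    refine Finset.sum_congr rfl fun w hw => ?_
    rw [map_smul, hu w hw, smul_eq_mul]
  have hnn : ∀ a : (Fin n → ℝ) → ℝ, (∀ w, 0 ≤ a w) → ∀ w ∈ s,
      0 ≤ a w * (if w = v then (0 : ℝ) else 1) := by
    intro a ha w _
    have := ha w
    split_ifs <;> simp [this]
  apply hS.face_mem _ hσ
  refine ⟨u, ?_, ?_⟩
  · rintro x ⟨a, ha, rfl⟩
    rw [key]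
    exact Finset.sum_nonneg (hnn a ha)
  · ext x
    constructor
    · rintro ⟨t, ht, rfl⟩
      refine ⟨⟨fun w => if w = v then t else 0, ?_, ?_⟩, ?_⟩
      · intro w
        dsimp only
        split_ifs
        · exact ht
        · exact le_rfl
      · simp [ite_smul, hv]
      · rw [map_smul, hu v hv]
        simp
    · rintro ⟨⟨a, ha, rfl⟩, hx⟩
      rw [key, Finset.sum_eq_zero_iff_of_nonneg (hnn a ha)] at hx
      refine ⟨a v, ha v, ?_⟩
      refine Finset.sum_eq_single v ?_ (fun h => absurd hv h)
      intro w hw hwv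
      have := hx w hw
      simp [hwv] at this
      simp [this]

lemma fan_rep {n : ℕ} (S : Set (Set (Fin n → ℝ))) (hS : IsCompleteFan S)
    (σ : Set (Fin n → ℝ)) (hσ : σ ∈ S) (x : Fin n → ℝ) (hx : x ∈ σ) :
    ∃ (t : Finset (Fin n → ℝ)) (b : (Fin n → ℝ) → ℝ) (w : (Fin n → ℝ) → (Fin n → ℝ)),
      (∀ v ∈ t, 0 ≤ b v) ∧ (∀ v ∈ t, w v ∈ fanRays S ∩ σ) ∧ x = ∑ v ∈ t, b v • w v := by
  classical
  obtain ⟨s, hint, hli, rfl⟩ := hS.simplicial σ hσ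
  have h : ∀ v : Fin n → ℝ, ∃ (k : ℕ) (w : Fin n → ℝ), v ∈ s →
      w ∈ fanRays S ∩ coneHullOf s ∧ v = (k : ℝ) • w := by
    intro v
    by_cases hv : v ∈ s
    · have hv0 : v ≠ 0 := hli.ne_zero (⟨v, hv⟩ : s)
      obtain ⟨k, w, hk, hw, hvw⟩ := exists_primitive v (hint v hv) hv0
      refine ⟨k, w, fun _ => ⟨⟨⟨hw, ?_⟩, ?_⟩, hvw⟩⟩
      · have hkr : (0 : ℝ) < k := by exact_mod_cast hk
        convert ray_mem S hS s hli hσ v hv using 1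
        ext y
        constructor
        · rintro ⟨t, ht, rfl⟩
          refine ⟨t / k, by positivity, ?_⟩
          rw [hvw, smul_smul, div_mul_cancel₀ _ hkr.ne']
        · rintro ⟨t, ht, rfl⟩
          exact ⟨t * k, by positivity, by rw [hvw, smul_smul]⟩
      · have hkr : (0 : ℝ) < k := by exact_mod_cast hk
        refine ⟨fun y => if y = v then (k : ℝ)⁻¹ else 0, ?_, ?_⟩
        · intro y
          dsimp only
          split_ifs <;> positivity
        · simp only [ite_smul, zero_smul, Finset.sum_ite_eq', hv, if_true]
          rw [hvw, smul_smul, inv_mul_cancel₀ hkr.ne', one_smul]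
    · exact ⟨0, 0, fun h => absurd h hv⟩
  choose k w hkw using h
  obtain ⟨a, ha, rfl⟩ := hx
  refine ⟨s, fun v => a v * k v, w, fun v _ => mul_nonneg (ha v) (Nat.cast_nonneg _),
    fun v hv => (hkw v hv).1, ?_⟩
  refine Finset.sum_congr rfl fun v hv => ?_
  rw [mul_smul, ← (hkw v hv).2]

lemma cone_closed {n : ℕ} (s : Finset (Fin n → ℝ))
    (hs : LinearIndependent ℝ (fun v : s => (v : Fin n → ℝ))) :
    IsClosed (coneHullOf s) := by
  classical
  let L : (s → ℝ) →ₗ[ℝ] (Fin n → ℝ) := Fintype.linearCombination ℝ (fun v : s => (v : Fin n → ℝ))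
  have hL : LinearMap.ker L = ⊥ := by
    rw [LinearMap.ker_eq_bot]
    exact hs.fintypeLinearCombination_injective
  have hce := LinearMap.isClosedEmbedding_of_injective (f := L) hL
  have h1 : IsClosed (Set.Ici (0 : s → ℝ)) := isClosed_Ici
  convert hce.isClosedMap _ h1 using 1
  ext x
  constructor
  · rintro ⟨a, ha, rfl⟩
    refine ⟨fun v => a v, fun v => ha v, ?_⟩
    simp only [L, Fintype.linearCombination_apply]
    exact Finset.sum_coe_sort s (fun v => a v • v)
  · rintro ⟨a, ha, rfl⟩
    refine ⟨fun v => if h : v ∈ s then a ⟨v, h⟩ else 0, ?_, ?_⟩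
    · intro v
      dsimp only
      split_ifs with h
      · exact ha ⟨v, h⟩
      · exact le_rfl
    · simp only [L, Fintype.linearCombination_apply]
      rw [← Finset.sum_coe_sort s]
      refine Finset.sum_congr rfl fun v _ => ?_
      simp

lemma exists_full {n : ℕ} (S : Set (Set (Fin n → ℝ))) (hS : IsCompleteFan S)
    (z : Fin n → ℝ) : ∃ σ ∈ S, z ∈ σ ∧ Submodule.span ℝ σ = ⊤ := by
  let A : Set (Set (Fin n → ℝ)) := {σ ∈ S | Submodule.span ℝ σ = ⊤}
  let B : Set (Set (Fin n → ℝ)) := {σ ∈ S | Submodule.span ℝ σ ≠ ⊤}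
  have hA : A.Finite := hS.finite.subset (fun σ h => h.1)
  have hB : B.Finite := hS.finite.subset (fun σ h => h.1)
  have hcl : IsClosed (⋃₀ A) := by
    rw [Set.sUnion_eq_biUnion]
    apply Set.Finite.isClosed_biUnion hA
    rintro σ ⟨hσ, _⟩
    obtain ⟨s, -, hli, rfl⟩ := hS.simplicial σ hσ
    exact cone_closed s hli
  have hd : Dense (⋂ σ ∈ B, ((Submodule.span ℝ σ : Set (Fin n → ℝ)))ᶜ) := by
    apply dense_biInter_of_isOpen _ hB.countable
    · rintro σ ⟨hσ, hne⟩
      rw [← interior_eq_empty_iff_dense_compl]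
      by_contra h
      exact hne (Submodule.eq_top_of_nonempty_interior' _ (Set.nonempty_iff_ne_empty.mpr h))
    · intro σ _
      exact (Submodule.closed_of_finiteDimensional _).isOpen_compl
  by_contra hz
  push Not at hz
  have hzU : z ∈ (⋃₀ A)ᶜ := by
    rintro ⟨σ, ⟨hσ, h⟩, hzσ⟩
    exact hz σ hσ hzσ h
  obtain ⟨y, hyU, hy⟩ := hd.inter_open_nonempty _ hcl.isOpen_compl ⟨z, hzU⟩
  have hyS : y ∈ ⋃₀ S := by rw [hS.complete]; trivial
  obtain ⟨σ, hσ, hyσ⟩ := hyS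
  by_cases h : Submodule.span ℝ σ = ⊤
  · exact hyU ⟨σ, ⟨hσ, h⟩, hyσ⟩
  · exact (Set.mem_iInter₂.mp hy σ ⟨hσ, h⟩) (Submodule.subset_span hyσ)

lemma cone_zero {n : ℕ} (s : Finset (Fin n → ℝ)) : (0 : Fin n → ℝ) ∈ coneHullOf s :=
  ⟨fun _ => 0, fun _ => le_rfl, by simp⟩

lemma cone_add {n : ℕ} (s : Finset (Fin n → ℝ)) {x y : Fin n → ℝ} (hx : x ∈ coneHullOf s)
    (hy : y ∈ coneHullOf s) : x + y ∈ coneHullOf s := by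
  obtain ⟨a, ha, rfl⟩ := hx
  obtain ⟨b, hb, rfl⟩ := hy
  exact ⟨fun v => a v + b v, fun v => add_nonneg (ha v) (hb v), by
    simp [add_smul, Finset.sum_add_distrib]⟩

lemma cone_smul {n : ℕ} (s : Finset (Fin n → ℝ)) {x : Fin n → ℝ} (hx : x ∈ coneHullOf s)
    {t : ℝ} (ht : 0 ≤ t) : t • x ∈ coneHullOf s := by
  obtain ⟨a, ha, rfl⟩ := hx
  exact ⟨fun v => t * a v, fun v => mul_nonneg ht (ha v), by
    simp [mul_smul, Finset.smul_sum]⟩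

lemma span_diff {n : ℕ} (s : Finset (Fin n → ℝ)) (x : Fin n → ℝ)
    (hx : x ∈ Submodule.span ℝ (coneHullOf s)) :
    ∃ p ∈ coneHullOf s, ∃ q ∈ coneHullOf s, p = x + q := by
  induction hx using Submodule.span_induction with
  | mem x h => exact ⟨x, h, 0, cone_zero s, by simp⟩
  | zero => exact ⟨0, cone_zero s, 0, cone_zero s, by simp⟩
  | add x y _ _ ihx ihy =>
    obtain ⟨p, hp, q, hq, h⟩ := ihx
    obtain ⟨p', hp', q', hq', h'⟩ := ihy
    exact ⟨p + p', cone_add s hp hp', q + q', cone_add s hq hq', by rw [h, h']; abel⟩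
  | smul t x _ ih =>
    obtain ⟨p, hp, q, hq, h⟩ := ih
    rcases le_total 0 t with ht | ht
    · exact ⟨t • p, cone_smul s hp ht, t • q, cone_smul s hq ht, by rw [h, smul_add]⟩
    · refine ⟨(-t) • q, cone_smul s hq (by linarith), (-t) • p, cone_smul s hp (by linarith), ?_⟩
      rw [h]
      module

lemma sum_mem_of_le_one {n : ℕ} {D : Set (Fin n → ℝ)} (hD : Convex ℝ D) (h0 : 0 ∈ D)
    (t : Finset (Fin n → ℝ)) (b : (Fin n → ℝ) → ℝ) (w : (Fin n → ℝ) → (Fin n → ℝ))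
    (hb : ∀ v ∈ t, 0 ≤ b v) (hw : ∀ v ∈ t, w v ∈ D) (h1 : ∑ v ∈ t, b v ≤ 1) :
    ∑ v ∈ t, b v • w v ∈ D := by
  rcases (Finset.sum_nonneg hb).eq_or_lt with h | h
  · have h2 := (Finset.sum_eq_zero_iff_of_nonneg hb).mp h.symm
    rw [Finset.sum_eq_zero (fun v hv => by rw [h2 v hv, zero_smul])]
    exact h0
  · have h2 := hD.centerMass_mem hb h hw
    have h3 := hD.smul_mem_of_zero_mem h0 h2 ⟨h.le, h1⟩
    rwa [Finset.centerMass, smul_smul, mul_inv_cancel₀ h.ne', one_smul] at h3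

/-- Let `S` be a complete simplicial rational fan in `ℝⁿ` (`n ≥ 1`), `c` a
positive integer, and `ρ_δ = c` for every ray `δ`. Let `Δ(L)` be the union over `σ ∈ S` of
the convex hulls of `{0} ∪ (Σ¹ ∩ σ)`. Then `ρ` is convex iff `Δ(L)` is convex, and if `ρ`
is strictly convex then moreover no `δ₀ ∈ Σ¹` lies in the convex hull of
`{0} ∪ (Σ¹ \ {δ₀})`. -/
theorem statement6 {n : ℕ} (hn : 1 ≤ n) (S : Set (Set (Fin n → ℝ)))
    (hS : IsCompleteFan S) (c : ℕ) (hc : 0 < c)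
    (ρ : (Fin n → ℝ) → ℕ) (hρ : ρ = fun _ => c)
    (f : (Fin n → ℝ) → ℝ)
    (hflin : ∀ σ ∈ S, ∃ l : (Fin n → ℝ) →ₗ[ℝ] ℝ, ∀ x ∈ σ, f x = l x)
    (hfval : ∀ δ ∈ fanRays S, f δ = (ρ δ : ℝ))
    (ΔL : Set (Fin n → ℝ))
    (hΔL : ΔL = ⋃ σ ∈ S, convexHull ℝ ({0} ∪ (fanRays S ∩ σ))) :
    (RhoIsConvex S ρ f ↔ Convex ℝ ΔL) ∧
    (RhoIsStrictlyConvex S ρ f →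
      ∀ δ₀ ∈ fanRays S, δ₀ ∉ convexHull ℝ ({0} ∪ (fanRays S \ {δ₀}))) := by
  have hcr : (0 : ℝ) < c := by exact_mod_cast hc
  have hval : ∀ δ ∈ fanRays S, f δ = (c : ℝ) := by
    intro δ hδ
    rw [hfval δ hδ, hρ]
  have hcone : ∀ σ ∈ S, ∃ s : Finset (Fin n → ℝ), σ = coneHullOf s := by
    intro σ hσ
    obtain ⟨s, -, -, h⟩ := hS.simplicial σ hσ
    exact ⟨s, h⟩
  have hcov : ∀ x : Fin n → ℝ, ∃ σ ∈ S, x ∈ σ := by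
    intro x
    have : x ∈ ⋃₀ S := by rw [hS.complete]; trivial
    exact this
  -- any functional with the right values on rays agrees with f on the cone
  have hagree : ∀ σ ∈ S, ∀ l : (Fin n → ℝ) →ₗ[ℝ] ℝ,
      (∀ δ ∈ fanRays S, δ ∈ σ → l δ = (ρ δ : ℝ)) → ∀ x ∈ σ, l x = f x := by
    intro σ hσ l hl x hx
    obtain ⟨l', hl'⟩ := hflin σ hσ
    obtain ⟨t, b, w, hb, hw, hxe⟩ := fan_rep S hS σ hσ x hx
    rw [hl' x hx, hxe, map_sum, map_sum]
    refine Finset.sum_congr rfl fun v hv => ?_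
    obtain ⟨h1, h2⟩ := hw v hv
    rw [map_smul, map_smul, hl _ h1 h2, ← hl' _ h2, hfval _ h1]
  have hsmul : ∀ (t : ℝ), 0 ≤ t → ∀ x, f (t • x) = t * f x := by
    intro t ht x
    obtain ⟨σ, hσ, hx⟩ := hcov x
    obtain ⟨s, rfl⟩ := hcone σ hσ
    obtain ⟨l, hl⟩ := hflin _ hσ
    rw [hl _ hx, hl _ (cone_smul s hx ht), map_smul, smul_eq_mul]
  have hrep : ∀ σ ∈ S, ∀ x ∈ σ, ∃ (t : Finset (Fin n → ℝ)) (b : (Fin n → ℝ) → ℝ)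
      (w : (Fin n → ℝ) → (Fin n → ℝ)), (∀ v ∈ t, 0 ≤ b v) ∧
      (∀ v ∈ t, w v ∈ fanRays S ∩ σ) ∧ x = ∑ v ∈ t, b v • w v ∧
      f x = (∑ v ∈ t, b v) * c := by
    intro σ hσ x hx
    obtain ⟨l', hl'⟩ := hflin σ hσ
    obtain ⟨t, b, w, hb, hw, hxe⟩ := fan_rep S hS σ hσ x hx
    refine ⟨t, b, w, hb, hw, hxe, ?_⟩
    rw [hl' x hx, hxe, map_sum, Finset.sum_mul]
    refine Finset.sum_congr rfl fun v hv => ?_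
    obtain ⟨h1, h2⟩ := hw v hv
    rw [map_smul, ← hl' _ h2, hval _ h1, smul_eq_mul]
  have hf0 : f 0 = 0 := by
    have := hsmul 0 le_rfl 0
    simpa using this
  have hpos : ∀ x, x ≠ 0 → 0 < f x := by
    intro x hx0
    obtain ⟨σ, hσ, hx⟩ := hcov x
    obtain ⟨t, b, w, hb, hw, hxe, hfx⟩ := hrep σ hσ x hx
    rw [hfx]
    refine mul_pos ((Finset.sum_nonneg hb).lt_of_ne' ?_) hcr
    intro h
    have h2 := (Finset.sum_eq_zero_iff_of_nonneg hb).mp h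
    apply hx0
    rw [hxe]
    exact Finset.sum_eq_zero (fun v hv => by rw [h2 v hv, zero_smul])
  have hΔ : ΔL = {x | f x ≤ c} := by
    rw [hΔL]
    ext x
    simp only [Set.mem_iUnion, Set.mem_setOf_eq, exists_prop]
    constructor
    · rintro ⟨σ, hσ, hx⟩
      obtain ⟨s, rfl⟩ := hcone σ hσ
      obtain ⟨l, hl⟩ := hflin _ hσ
      have hsub : convexHull ℝ ({0} ∪ (fanRays S ∩ coneHullOf s)) ⊆
          {y | y ∈ coneHullOf s ∧ l y ≤ c} := by
        apply convexHull_min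
        · rintro y (hy | ⟨hy, hy'⟩)
          · rw [Set.mem_singleton_iff.mp hy]
            exact ⟨cone_zero s, by simp⟩
          · exact ⟨hy', by rw [← hl y hy', hval y hy]⟩
        · rintro y ⟨hy, hy'⟩ z ⟨hz, hz'⟩ a b ha hb hab
          refine ⟨cone_add s (cone_smul s hy ha) (cone_smul s hz hb), ?_⟩
          simp only [map_add, map_smul, smul_eq_mul]
          calc a * l y + b * l z ≤ a * c + b * c := by gcongr
            _ = c := by rw [← add_mul, hab, one_mul]
      obtain ⟨h1, h2⟩ := hsub hx
      rw [hl x h1]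
      exact h2
    · intro hx
      obtain ⟨σ, hσ, hxσ⟩ := hcov x
      refine ⟨σ, hσ, ?_⟩
      obtain ⟨t, b, w, hb, hw, hxe, hfx⟩ := hrep σ hσ x hxσ
      rw [hxe]
      apply sum_mem_of_le_one (convex_convexHull ℝ _) (subset_convexHull ℝ _ (Or.inl rfl)) t b w hb
      · intro v hv
        exact subset_convexHull ℝ _ (Or.inr (hw v hv))
      · rw [hfx] at hx
        by_contra h
        push Not at h
        nlinarith
  refine ⟨⟨?_, ?_⟩, ?_⟩
  · intro hconv
    rw [hΔ]
    intro x hx y hy a b ha hb hab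
    obtain ⟨σ, hσ, hz, hfull⟩ := exists_full S hS (a • x + b • y)
    obtain ⟨l, hl⟩ := hflin σ hσ
    have hle := hconv σ hσ hfull l (fun δ hδ hδσ => by rw [← hl δ hδσ, hfval δ hδ])
    simp only [Set.mem_setOf_eq] at hx hy ⊢
    rw [hl _ hz]
    simp only [map_add, map_smul, smul_eq_mul]
    calc a * l x + b * l y ≤ a * c + b * c := by
          gcongr
          · exact (hle x).trans hx
          · exact (hle y).trans hy
      _ = c := by rw [← add_mul, hab, one_mul]
  · intro hconv
    rw [hΔ] at hconv
    have hsub : ∀ x y, f (x + y) ≤ f x + f y := by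
      intro x y
      by_cases hx : x = 0
      · simp [hx, hf0]
      by_cases hy : y = 0
      · simp [hy, hf0]
      have hfx := hpos x hx
      have hfy := hpos y hy
      have h1 : (c / f x) • x ∈ {x | f x ≤ (c : ℝ)} := by
        simp only [Set.mem_setOf_eq]
        rw [hsmul _ (by positivity), div_mul_cancel₀ _ hfx.ne']
      have h2 : (c / f y) • y ∈ {x | f x ≤ (c : ℝ)} := by
        simp only [Set.mem_setOf_eq]
        rw [hsmul _ (by positivity), div_mul_cancel₀ _ hfy.ne']
      have h3 := hconv h1 h2 (a := f x / (f x + f y)) (b := f y / (f x + f y))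
        (by positivity) (by positivity) (by field_simp)
      have h4 : (f x / (f x + f y)) • (c / f x) • x + (f y / (f x + f y)) • (c / f y) • y
          = (c / (f x + f y)) • (x + y) := by
        rw [smul_smul, smul_smul, smul_add]
        congr 2 <;> field_simp
      rw [h4] at h3
      simp only [Set.mem_setOf_eq] at h3
      rw [hsmul _ (by positivity), div_mul_eq_mul_div, div_le_iff₀ (by positivity)] at h3
      exact le_of_mul_le_mul_left h3 hcr
    intro σ hσ hfull l hl x
    have hag := hagree σ hσ l hl
    obtain ⟨s, rfl⟩ := hcone σ hσ
    obtain ⟨p, hp, q, hq, hpq⟩ := span_diff s x (by rw [hfull]; trivial)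
    have h1 := hsub x q
    rw [← hpq, ← hag p hp, ← hag q hq, hpq, map_add] at h1
    linarith
  · intro hstr δ₀ hδ₀ hmem
    obtain ⟨σ, hσ, hz, hfull⟩ := exists_full S hS δ₀
    obtain ⟨l, hl⟩ := hflin σ hσ
    have hle := hstr σ hσ hfull l (fun δ hδ hδσ => by rw [← hl δ hδσ, hfval δ hδ])
    have hl0 : l δ₀ = c := by rw [← hl δ₀ hz, hval δ₀ hδ₀]
    obtain ⟨⟨u, hu, hface⟩, -⟩ := hS.inter_face σ hσ _ hδ₀.2
    have hu0 : u δ₀ = 0 := by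
      have : δ₀ ∈ σ ∩ {x | ∃ t : ℝ, 0 ≤ t ∧ x = t • δ₀} := ⟨hz, 1, zero_le_one, by simp⟩
      rw [hface] at this
      exact this.2
    have hsub : convexHull ℝ ({0} ∪ (fanRays S \ {δ₀})) ⊆
        {y | l y < c ∨ (l y = c ∧ 0 < u y)} := by
      apply convexHull_min
      · rintro y (hy | ⟨hy, hy'⟩)
        · left
          rw [Set.mem_singleton_iff.mp hy, map_zero]
          exact hcr
        · have hly := (hle y).1
          rw [hval y hy] at hly
          rcases hly.lt_or_eq with h | h
          · exact Or.inl h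
          · right
            refine ⟨h, ?_⟩
            have hyσ : y ∈ σ := (hle y).2.mp (by rw [h, hval y hy])
            refine (hu y hyσ).lt_of_ne' ?_
            intro huy
            have : y ∈ σ ∩ {x | ∃ t : ℝ, 0 ≤ t ∧ x = t • δ₀} := by
              rw [hface]
              exact ⟨hyσ, huy⟩
            obtain ⟨-, t, ht, hyt⟩ := this
            apply hy'
            rw [hyt, map_smul, hl0, smul_eq_mul] at h
            have ht1 : t = 1 := by
              have := hcr.ne'
              field_simp at h
              exact h
            rw [Set.mem_singleton_iff, hyt, ht1, one_smul]
      · intro y hy z hz a b ha hb hab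
        rcases ha.eq_or_lt with rfl | ha
        · rw [zero_add] at hab
          simpa [hab] using hz
        rcases hb.eq_or_lt with rfl | hb
        · rw [add_zero] at hab
          simpa [hab] using hy
        simp only [Set.mem_setOf_eq, map_add, map_smul, smul_eq_mul] at hy hz ⊢
        have hb' : b = 1 - a := by linarith
        have hac : a * c + b * c = c := by rw [← add_mul, hab, one_mul]
        rcases hy with hy | ⟨hy, hy'⟩
        · left
          have h1 : a * l y < a * c := mul_lt_mul_of_pos_left hy ha
          have h2 : b * l z ≤ b * c := by
            apply mul_le_mul_of_nonneg_left _ hb.le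
            rcases hz with hz | hz
            · exact hz.le
            · exact hz.1.le
          linarith
        · rcases hz with hz | ⟨hz, hz'⟩
          · left
            have h2 : b * l z < b * c := mul_lt_mul_of_pos_left hz hb
            rw [hy]
            linarith
          · right
            refine ⟨by rw [hy, hz, hac], by positivity⟩
    rcases hsub hmem with h | ⟨-, h⟩
    · exact absurd hl0 h.ne
    · exact absurd hu0 h.ne'
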